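/- arXiv:2311.11049 — 4 statements merged into one kernel-verified Lean document; each statement's English description precedes it below -/
import Mathlib

section
/- There exists an irreducible projective α-representation of G on the complex vector space Fin (p ^ c.rank) → ℂ; that is, there is a function ρ : G → ((Fin (p ^ c.rank) → ℂ) →ₗ[ℂ] (Fin (p ^ c.rank) → ℂ)) with ρ 0 = LinearMap.id, ρ g ∘ₗ ρ h = α g h • ρ (g + h) for all g, h ∈ G, whose only invariant submodules are ⊥ and ⊤. -/
/-- The bilinear 2-cocycle `α (m,k) (m',k') = ξ ^ (∑ i ∑ j, c i j * πᵢ (m' i) * k j)`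
on `G = (Π i, ZMod (p ^ r i)) × (Fin s → ZMod p)`, where `πᵢ : ZMod (p ^ r i) →+* ZMod p`
is the natural projection. -/
noncomputable def bilinAlpha (p : ℕ) {t s : ℕ} (r : Fin t → ℕ) (hr : ∀ i, 1 ≤ r i)
    (c : Matrix (Fin t) (Fin s) (ZMod p)) (ξ : ℂˣ)
    (g h : (∀ i : Fin t, ZMod (p ^ r i)) × (Fin s → ZMod p)) : ℂˣ :=
  ξ ^ (∑ i, ∑ j, c i j *
      ZMod.castHom (dvd_pow_self p (Nat.one_le_iff_ne_zero.mp (hr i))) (ZMod p) (h.1 i) *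
      g.2 j).val


theorem exists_irreducible_projective_rep (p t s : ℕ) (hp : p.Prime) (ht : 1 ≤ t) (hs : 1 ≤ s)
    (r : Fin t → ℕ) (hr : ∀ i, 1 ≤ r i)
    (c : Matrix (Fin t) (Fin s) (ZMod p)) (ξ : ℂˣ) (hξ : IsPrimitiveRoot ξ p) :
    ∃ ρ : ((∀ i : Fin t, ZMod (p ^ r i)) × (Fin s → ZMod p)) →
        ((Fin (p ^ c.rank) → ℂ) →ₗ[ℂ] (Fin (p ^ c.rank) → ℂ)),
      ρ 0 = LinearMap.id ∧
      (∀ g h, ρ g ∘ₗ ρ h = (bilinAlpha p r hr c ξ g h : ℂ) • ρ (g + h)) ∧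
      (∀ W : Submodule ℂ (Fin (p ^ c.rank) → ℂ),
        (∀ g, (ρ g) '' (W : Set (Fin (p ^ c.rank) → ℂ)) ⊆ (W : Set (Fin (p ^ c.rank) → ℂ))) →
          W = ⊥ ∨ W = ⊤) := by
  classical
  have : Fact p.Prime := ⟨hp⟩
  have hξ' : (ξ : ℂ) ^ p = 1 := by
    rw [← Units.val_pow_eq_pow_val, hξ.pow_eq_one, Units.val_one]
  have hprim : IsPrimitiveRoot (ξ : ℂ) p := IsPrimitiveRoot.coe_units_iff.mpr hξ
  let ψ : AddChar (ZMod p) ℂ := AddChar.zmodChar p hξ'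
  have hψ : ψ.IsPrimitive := AddChar.zmodChar_primitive_of_primitive_root p hprim
  have hψ1 : ψ ≠ 1 := by
    have := hψ (one_ne_zero)
    rwa [AddChar.mulShift_one] at this
  let R := LinearMap.range c.mulVecLin
  have hcard : Fintype.card R = p ^ c.rank := by
    rw [Module.card_eq_pow_finrank (K := ZMod p) (V := R), ZMod.card]
    rfl
  let e : Fin (p ^ c.rank) ≃ R := (Fintype.equivFinOfCardEq hcard).symm
  let ck : (Fin s → ZMod p) →ₗ[ZMod p] R := c.mulVecLin.rangeRestrict
  let π : (∀ i : Fin t, ZMod (p ^ r i)) →+ (Fin t → ZMod p) :=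
    { toFun := fun m i =>
        ZMod.castHom (dvd_pow_self p (Nat.one_le_iff_ne_zero.mp (hr i))) (ZMod p) (m i)
      map_zero' := by funext i; simp only [Pi.zero_apply, map_zero]
      map_add' := by intro a b; funext i; simp only [Pi.add_apply, map_add] }
  have hπ : Function.Surjective π := by
    intro u
    choose m hm using fun i => ZMod.castHom_surjective
      (dvd_pow_self p (Nat.one_le_iff_ne_zero.mp (hr i))) (u i)
    exact ⟨m, funext hm⟩
  have hα : ∀ g h, (bilinAlpha p r hr c ξ g h : ℂ) = ψ (π h.1 ⬝ᵥ (ck g.2 : Fin t → ZMod p)) := by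
    intro g h
    have : (π h.1 ⬝ᵥ (ck g.2 : Fin t → ZMod p)) = ∑ i, ∑ j, c i j *
      ZMod.castHom (dvd_pow_self p (Nat.one_le_iff_ne_zero.mp (hr i))) (ZMod p) (h.1 i) *
      g.2 j := by
      change (∑ i, ZMod.castHom (dvd_pow_self p (Nat.one_le_iff_ne_zero.mp (hr i))) (ZMod p) (h.1 i)
        * (∑ j, c i j * g.2 j)) = _
      refine Finset.sum_congr rfl fun i _ => ?_
      rw [Finset.mul_sum]
      refine Finset.sum_congr rfl fun j _ => ?_
      ring
    rw [this, bilinAlpha, Units.val_pow_eq_pow_val]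
    exact (AddChar.zmodChar_apply hξ' _).symm
  let ρ : ((∀ i : Fin t, ZMod (p ^ r i)) × (Fin s → ZMod p)) →
        ((Fin (p ^ c.rank) → ℂ) →ₗ[ℂ] (Fin (p ^ c.rank) → ℂ)) := fun g =>
    { toFun := fun f x => ψ (π g.1 ⬝ᵥ (e x : Fin t → ZMod p)) * f (e.symm (e x + ck g.2))
      map_add' := by intro a b; funext x; simp only [Pi.add_apply]; ring
      map_smul' := by
        intro a b; funext x; simp only [Pi.smul_apply, smul_eq_mul, RingHom.id_apply]; ring }
  have hρ : ∀ g f x, ρ g f x =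
      ψ (π g.1 ⬝ᵥ (e x : Fin t → ZMod p)) * f (e.symm (e x + ck g.2)) := fun _ _ _ => rfl
  refine ⟨ρ, ?_, ?_, ?_⟩
  · refine LinearMap.ext fun f => funext fun x => ?_
    rw [hρ]
    simp
  · intro g h
    refine LinearMap.ext fun f => funext fun x => ?_
    rw [LinearMap.comp_apply, hρ, hρ, LinearMap.smul_apply, Pi.smul_apply, hρ, hα, smul_eq_mul,
      Equiv.apply_symm_apply, Prod.fst_add, Prod.snd_add, map_add π, map_add ck, add_dotProduct,
      Submodule.coe_add, dotProduct_add, AddChar.map_add_eq_mul, AddChar.map_add_eq_mul, add_assoc]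
    ring
  · intro W hW
    have hW' : ∀ g f, f ∈ W → ρ g f ∈ W := fun g f hf => hW g ⟨f, hf, rfl⟩
    by_cases hbot : W = ⊥
    · exact Or.inl hbot
    right
    obtain ⟨f, hf, hf0⟩ := Submodule.exists_mem_ne_zero_of_ne_bot hbot
    obtain ⟨x0, hx0⟩ := Function.ne_iff.mp hf0
    rw [Pi.zero_apply] at hx0
    choose m hm using hπ
    have hsum : (∑ u : Fin t → ZMod p, ψ (-(u ⬝ᵥ (e x0 : Fin t → ZMod p))) • ρ (m u, 0) f) ∈ W :=
      W.sum_mem fun u _ => W.smul_mem _ (hW' _ _ hf)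
    have heq : (∑ u : Fin t → ZMod p, ψ (-(u ⬝ᵥ (e x0 : Fin t → ZMod p))) • ρ (m u, 0) f)
        = ((Fintype.card (Fin t → ZMod p) : ℂ) * f x0) • Pi.single x0 (1 : ℂ) := by
      funext x
      have h1 : ∀ u : Fin t → ZMod p,
          (ψ (-(u ⬝ᵥ (e x0 : Fin t → ZMod p))) • ρ (m u, 0) f) x
          = ψ (u ⬝ᵥ ((e x : Fin t → ZMod p) - e x0)) * f x := by
        intro u
        rw [Pi.smul_apply, hρ, hm, map_zero, add_zero, Equiv.symm_apply_apply, smul_eq_mul,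
          ← mul_assoc, ← AddChar.map_add_eq_mul, dotProduct_sub, neg_add_eq_sub]
      rw [Finset.sum_apply, Finset.sum_congr rfl fun u _ => h1 u, ← Finset.sum_mul]
      by_cases hx : x = x0
      · subst hx
        simp
      · have hv : ((e x : Fin t → ZMod p) - e x0) ≠ 0 := by
          intro h
          exact hx (e.injective (Subtype.ext (sub_eq_zero.mp h)))
        obtain ⟨i, hi⟩ := Function.ne_iff.mp hv
        generalize hvv : ((e x : Fin t → ZMod p) - e x0) = v at hi
        let χ : AddChar (Fin t → ZMod p) ℂ :=
          { toFun := fun u => ψ (u ⬝ᵥ v)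
            map_zero_eq_one' := by simp
            map_add_eq_mul' := by
              intro a b; rw [add_dotProduct, AddChar.map_add_eq_mul] }
        have hχ : χ ≠ 0 := by
          intro h
          apply hψ1
          ext a
          have h2 : χ (Pi.single i (a * (v i)⁻¹)) = 1 := by rw [h]; rfl
          change ψ (Pi.single i (a * (v i)⁻¹) ⬝ᵥ v) = 1 at h2
          rw [single_dotProduct, inv_mul_cancel_right₀ hi] at h2
          rw [h2]; rfl
        have h0 : ∑ u, ψ (u ⬝ᵥ v) = 0 := AddChar.sum_eq_zero_iff_ne_zero.mpr hχ
        rw [h0, zero_mul, Pi.smul_apply, Pi.single_eq_of_ne hx, smul_zero]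
    rw [heq] at hsum
    have hd : Pi.single x0 (1 : ℂ) ∈ W := by
      refine (W.smul_mem_iff (mul_ne_zero ?_ hx0)).mp hsum
      exact Nat.cast_ne_zero.mpr Fintype.card_ne_zero
    have hall : ∀ y, Pi.single y (1 : ℂ) ∈ W := by
      intro y
      obtain ⟨k, hk⟩ := c.mulVecLin.surjective_rangeRestrict (e x0 - e y)
      have h3 := hW' (0, k) _ hd
      convert h3 using 1
      funext x
      have hk' : ck k = e x0 - e y := hk
      rw [hρ, map_zero, zero_dotProduct, AddChar.map_zero_eq_one, one_mul, hk']
      by_cases hxy : x = y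
      · subst hxy
        simp
      · rw [Pi.single_eq_of_ne hxy, Pi.single_eq_of_ne]
        intro h
        apply hxy
        have h4 := (Equiv.symm_apply_eq e).mp h
        apply e.injective
        have : e x - e y = 0 := by
          have := sub_eq_zero.mpr h4
          rw [← this]; abel
        exact sub_eq_zero.mp this
    rw [eq_top_iff]
    intro v _
    rw [pi_eq_sum_univ' v]
    refine W.sum_mem fun y _ => ?_
    refine W.smul_mem _ ?_
    convert hall y using 1
end

section
/- G is of α-central type — i.e. any two irreducible projective α-representations of G on nonzero finite-dimensional complex vector spaces are linearly equivalent — if and only if s = t, r i = 1 for every i : Fin t, and c.rank = t. -/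
theorem addChar_ne_zero {A : Type} [AddCommGroup A] (χ : AddChar A ℂ) (a : A) : χ a ≠ 0 := by
  intro h
  have h1 : χ (a + -a) = 1 := by simp
  rw [AddChar.map_add_eq_mul, h, zero_mul] at h1
  exact zero_ne_one h1

section Abstract

variable {G : Type} [AddCommGroup G] [Finite G] {R : Type} [CommRing R]
  (B : G →+ G →+ R) (e : AddChar R ℂ)

/-- Bundled projective representation condition. -/
def IsPRep {V : Type} [AddCommGroup V] [Module ℂ V] (ρ : G → (V →ₗ[ℂ] V)) : Prop :=
  ρ 0 = LinearMap.id ∧ ∀ g h, ρ g ∘ₗ ρ h = (e (B g h)) • ρ (g + h)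

/-- Irreducibility (without nonvanishing). -/
def IsIrr {V : Type} [AddCommGroup V] [Module ℂ V] (ρ : G → (V →ₗ[ℂ] V)) : Prop :=
  ∀ W : Submodule ℂ V, (∀ g, (ρ g) '' (W : Set V) ⊆ (W : Set V)) → W = ⊥ ∨ W = ⊤

theorem trace_zero {V : Type} [AddCommGroup V] [Module ℂ V]
    (he : Function.Injective e) (hK : ∀ g, (∀ h, B g h = B h g) → g = 0)
    (ρ : G → (V →ₗ[ℂ] V)) (hρ : IsPRep B e ρ) (x : G) (hx : x ≠ 0) :
    LinearMap.trace ℂ V (ρ x) = 0 := by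
  have : ∃ h, B x h ≠ B h x := by
    by_contra hcon
    push Not at hcon
    exact hx (hK x hcon)
  obtain ⟨h, hh⟩ := this
  have h1 := hρ.2 (x - h) h
  have h2 := hρ.2 h (x - h)
  rw [sub_add_cancel] at h1
  rw [add_sub_cancel] at h2
  have h3 := LinearMap.trace_mul_comm ℂ (ρ h) (ρ (x - h))
  rw [Module.End.mul_eq_comp, Module.End.mul_eq_comp, h1, h2, map_smul, map_smul] at h3
  by_contra hne
  have h4 : e (B h (x - h)) = e (B (x - h) h) := by
    simpa [hne] using h3
  have h5 := he h4
  simp at h5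
  exact hh h5.symm

theorem equiv_of_trivial
    (he : Function.Injective e) (hK : ∀ g, (∀ h, B g h = B h g) → g = 0)
    {V₁ : Type} [AddCommGroup V₁] [Module ℂ V₁] [Nontrivial V₁]
    {V₂ : Type} [AddCommGroup V₂] [Module ℂ V₂] [FiniteDimensional ℂ V₂] [Nontrivial V₂]
    (ρ₁ : G → (V₁ →ₗ[ℂ] V₁)) (ρ₂ : G → (V₂ →ₗ[ℂ] V₂))
    (h₁ : IsPRep B e ρ₁) (i₁ : IsIrr ρ₁) (h₂ : IsPRep B e ρ₂) (i₂ : IsIrr ρ₂) :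
    ∃ T : V₁ ≃ₗ[ℂ] V₂, ∀ g v, T (ρ₁ g v) = ρ₂ g (T v) := by
  classical
  have := Fintype.ofFinite G
  let avg : (V₁ →ₗ[ℂ] V₂) → (V₁ →ₗ[ℂ] V₂) := fun S =>
    ∑ g, e (B g g) • (ρ₂ g ∘ₗ S ∘ₗ ρ₁ (-g))
  have havg : ∀ S g v, avg S (ρ₁ g v) = ρ₂ g (avg S v) := by
    intro S h v
    simp only [avg, LinearMap.sum_apply, map_sum, LinearMap.smul_apply, LinearMap.comp_apply,
      map_smul]
    rw [← Equiv.sum_comp (Equiv.addLeft h)]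
    refine Finset.sum_congr rfl fun g _ => ?_
    have e1 := LinearMap.congr_fun (h₁.2 (-(h + g)) h) v
    have e2 := LinearMap.congr_fun (h₂.2 h g) (S (ρ₁ (-g) v))
    simp only [LinearMap.comp_apply, LinearMap.smul_apply] at e1 e2
    rw [Equiv.coe_addLeft, e1, e2, map_smul, map_smul, smul_smul, smul_smul,
      ← AddChar.map_add_eq_mul, ← AddChar.map_add_eq_mul]
    have e3 : -(h + g) + h = -g := by abel
    rw [e3]
    congr 2
    simp
    ring
  obtain ⟨S, hS⟩ : ∃ S, avg S ≠ 0 := by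
    by_contra hcon
    push Not at hcon
    obtain ⟨v, hv⟩ := exists_ne (0 : V₁)
    obtain ⟨f, hf⟩ : ∃ f : Module.Dual ℂ V₁, f v ≠ 0 := by
      by_contra hc
      push Not at hc
      exact hv ((Module.forall_dual_apply_eq_zero_iff ℂ v).mp hc)
    have hz : ∑ g, (e (B g g) * f (ρ₁ (-g) v)) • ρ₂ g = 0 := by
      ext w
      have := LinearMap.congr_fun (hcon (f.smulRight w)) v
      simpa [avg, LinearMap.sum_apply, smul_smul] using this
    have ht := congrArg (LinearMap.trace ℂ V₂) hz
    rw [map_sum, Finset.sum_eq_single 0] at ht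
    · simp [h₁.1, h₂.1, hf, LinearMap.trace_id, Module.finrank_pos.ne'] at ht
    · intro g _ hg
      rw [map_smul, trace_zero B e he hK ρ₂ h₂ g hg, smul_zero]
    · simp
  have hker : LinearMap.ker (avg S) = ⊥ := by
    rcases i₁ (LinearMap.ker (avg S)) (by
      rintro g _ ⟨v, hv, rfl⟩
      have : avg S v = 0 := hv
      simp [havg, this]) with h | h
    · exact h
    · exact absurd (LinearMap.ker_eq_top.mp h) hS
  have hran : LinearMap.range (avg S) = ⊤ := by
    rcases i₂ (LinearMap.range (avg S)) (by
      rintro g _ ⟨_, ⟨v, rfl⟩, rfl⟩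
      exact ⟨ρ₁ g v, havg S g v⟩) with h | h
    · exact absurd (LinearMap.range_eq_bot.mp h) hS
    · exact h
  exact ⟨LinearEquiv.ofBijective (avg S) ⟨LinearMap.ker_eq_bot.mp hker,
    LinearMap.range_eq_top.mp hran⟩, fun g v => havg S g v⟩

/-- The twisted regular representation. -/
noncomputable def regRep (g : G) : (G → ℂ) →ₗ[ℂ] (G → ℂ) where
  toFun f := fun x => e (B g (x - g)) * f (x - g)
  map_add' f f' := by ext x; simp [mul_add]
  map_smul' a f := by ext x; simp; ring

theorem regRep_isPRep : IsPRep B e (regRep B e) := by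
  constructor
  · ext f x
    simp [regRep]
  · intro g h
    apply LinearMap.ext
    intro f
    funext x
    simp only [regRep, LinearMap.comp_apply, LinearMap.smul_apply, Pi.smul_apply, smul_eq_mul,
      LinearMap.coe_mk, AddHom.coe_mk, ← mul_assoc, ← AddChar.map_add_eq_mul]
    have : x - g - h = x - (g + h) := by abel
    rw [this]
    congr 2
    simp
    ring

theorem exists_irr : ∃ (V : Type) (_ : AddCommGroup V) (_ : Module ℂ V)
    (_ : FiniteDimensional ℂ V) (_ : Nontrivial V) (ρ : G → (V →ₗ[ℂ] V)),
    IsPRep B e ρ ∧ IsIrr ρ := by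
  classical
  let P : Submodule ℂ (G → ℂ) → Prop := fun W =>
    W ≠ ⊥ ∧ ∀ g, ∀ w ∈ W, regRep B e g w ∈ W
  have hP : ∃ W, P W := ⟨⊤, top_ne_bot, fun g w _ => trivial⟩
  obtain ⟨W, hW, hmin⟩ := wellFounded_lt.has_min {W | P W} hP
  have hnt : Nontrivial W := Submodule.nontrivial_iff_ne_bot.mpr hW.1
  let ρ : G → (W →ₗ[ℂ] W) := fun g => (regRep B e g).restrict (hW.2 g)
  refine ⟨W, inferInstance, inferInstance, inferInstance, hnt, ρ, ⟨?_, ?_⟩, ?_⟩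
  · ext1 w
    apply Subtype.ext
    have := LinearMap.congr_fun (regRep_isPRep B e).1 (w : G → ℂ)
    exact this
  · intro g h
    ext1 w
    apply Subtype.ext
    have := LinearMap.congr_fun ((regRep_isPRep B e).2 g h) (w : G → ℂ)
    exact this
  · intro U hU
    by_cases hb : U = ⊥
    · exact Or.inl hb
    right
    have hPU : P (U.map W.subtype) := by
      constructor
      · intro h0
        exact hb ((Submodule.map_injective_of_injective W.injective_subtype) (by rw [h0, Submodule.map_bot]))
      · rintro g _ ⟨u, hu, rfl⟩
        exact ⟨ρ g u, hU g ⟨u, hu, rfl⟩, rfl⟩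
    have hnlt := hmin _ hPU
    have hle : U.map W.subtype ≤ W := Submodule.map_subtype_le W U
    have heq : U.map W.subtype = W := by
      by_contra hne
      exact hnlt (lt_of_le_of_ne hle hne)
    rw [eq_top_iff]
    rintro ⟨w, hw⟩ -
    rw [← heq] at hw
    obtain ⟨u, hu, huw⟩ := hw
    have : u = ⟨w, by assumption⟩ := Subtype.ext huw
    exact this ▸ hu

theorem trivial_of_equiv
    (H : ∀ (V₁ : Type) [AddCommGroup V₁] [Module ℂ V₁] [FiniteDimensional ℂ V₁] [Nontrivial V₁]
        (V₂ : Type) [AddCommGroup V₂] [Module ℂ V₂] [FiniteDimensional ℂ V₂] [Nontrivial V₂]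
        (ρ₁ : G → (V₁ →ₗ[ℂ] V₁)) (ρ₂ : G → (V₂ →ₗ[ℂ] V₂)),
        IsPRep B e ρ₁ → IsIrr ρ₁ → IsPRep B e ρ₂ → IsIrr ρ₂ →
        ∃ T : V₁ ≃ₗ[ℂ] V₂, ∀ g v, T (ρ₁ g v) = ρ₂ g (T v))
    (x : G) (hx : ∀ h, B x h = B h x) : x = 0 := by
  by_contra hne
  obtain ⟨χ, hχ⟩ := (AddChar.exists_apply_ne_zero (a := x)).mpr hne
  obtain ⟨V, _, _, _, _, ρ, hρ, iρ⟩ := exists_irr B e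
  have hχ0 : ∀ g, χ g ≠ 0 := fun g => addChar_ne_zero χ g
  obtain ⟨T, hT⟩ := H V V ρ (fun g => χ g • ρ g) hρ iρ (by
    refine ⟨by simp [hρ.1], fun g h => ?_⟩
    simp only [LinearMap.smul_comp, LinearMap.comp_smul, hρ.2, smul_smul, AddChar.map_add_eq_mul]
    congr 1
    ring) (by
    intro W hW
    apply iρ W
    rintro g _ ⟨w, hw, rfl⟩
    have := W.smul_mem (χ g)⁻¹ (hW g ⟨w, hw, rfl⟩)
    simpa [smul_smul, hχ0 g] using this)
  obtain ⟨μ, hμ⟩ := Module.End.exists_eigenvalue (ρ x)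
  have htop : Module.End.eigenspace (ρ x) μ = ⊤ := by
    rcases iρ (Module.End.eigenspace (ρ x) μ) (by
      rintro g _ ⟨w, hw, rfl⟩
      rw [SetLike.mem_coe, Module.End.mem_eigenspace_iff] at hw ⊢
      have e1 := LinearMap.congr_fun (hρ.2 x g) w
      have e2 := LinearMap.congr_fun (hρ.2 g x) w
      rw [add_comm g x, ← hx g, ← hρ.2 x g] at e2
      simp only [LinearMap.comp_apply] at e2
      rw [← e2, hw, map_smul]) with h | h
    · exact absurd h hμ
    · exact h
  have hsc : ∀ v, ρ x v = μ • v := fun v =>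
    Module.End.mem_eigenspace_iff.mp (htop ▸ Submodule.mem_top)
  have hμ0 : μ ≠ 0 := by
    rintro rfl
    obtain ⟨v, hv⟩ := exists_ne (0 : V)
    have e1 := LinearMap.congr_fun (hρ.2 (-x) x) v
    have hne' : e (B (-x) x) ≠ 0 := addChar_ne_zero e _
    rw [neg_add_cancel, hρ.1, LinearMap.comp_apply, hsc, zero_smul, map_zero,
      LinearMap.smul_apply, LinearMap.id_apply] at e1
    rcases smul_eq_zero.mp e1.symm with h | h
    · exact hne' h
    · exact hv h
  obtain ⟨v, hv⟩ := exists_ne (0 : V)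
  have h1 := hT x v
  rw [hsc, map_smul, LinearMap.smul_apply, hsc, smul_smul] at h1
  have hTv : T v ≠ 0 := by simpa using hv
  have h2 := smul_left_injective ℂ hTv h1
  have h3 : χ x * μ = 1 * μ := by rw [one_mul]; exact h2.symm
  exact hχ (mul_right_cancel₀ hμ0 h3)

end Abstract

theorem radical_iff (p t s : ℕ) (hp : p.Prime)
    (r : Fin t → ℕ) (hr : ∀ i, 1 ≤ r i) (c : Matrix (Fin t) (Fin s) (ZMod p))
    (π : ∀ i, ZMod (p ^ r i) →+* ZMod p) :
    (∀ g : (∀ i : Fin t, ZMod (p ^ r i)) × (Fin s → ZMod p),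
      (∀ h : (∀ i : Fin t, ZMod (p ^ r i)) × (Fin s → ZMod p),
        ∑ i, ∑ j, c i j * π i (h.1 i) * g.2 j = ∑ i, ∑ j, c i j * π i (g.1 i) * h.2 j) → g = 0) ↔
    (s = t ∧ (∀ i, r i = 1) ∧ c.rank = t) := by
  have := Fact.mk hp
  have : ∀ i, NeZero (p ^ r i) := fun i => ⟨pow_ne_zero _ hp.ne_zero⟩
  have hsum1 : ∀ (u : Fin t → ZMod p) (k : Fin s → ZMod p),
      ∑ i, ∑ j, c i j * u i * k j = u ⬝ᵥ c.mulVec k := by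
    intro u k
    simp only [dotProduct, Matrix.mulVec, Finset.mul_sum]
    refine Finset.sum_congr rfl fun i _ => Finset.sum_congr rfl fun j _ => by ring
  have hrad : ∀ g : (∀ i : Fin t, ZMod (p ^ r i)) × (Fin s → ZMod p),
      (∀ h : (∀ i : Fin t, ZMod (p ^ r i)) × (Fin s → ZMod p),
        ∑ i, ∑ j, c i j * π i (h.1 i) * g.2 j = ∑ i, ∑ j, c i j * π i (g.1 i) * h.2 j) ↔
      c.mulVec g.2 = 0 ∧ Matrix.vecMul (fun i => π i (g.1 i)) c = 0 := by
    intro g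
    have hB : ∀ g h : (∀ i : Fin t, ZMod (p ^ r i)) × (Fin s → ZMod p),
      ∑ i, ∑ j, c i j * π i (h.1 i) * g.2 j = (fun i => π i (h.1 i)) ⬝ᵥ c.mulVec g.2 :=
      fun g h => hsum1 (fun i => π i (h.1 i)) g.2
    simp only [hB g, fun h => hB h g]
    constructor
    · intro H
      constructor
      · funext i
        have := H (Pi.single i 1, 0)
        have h2 : (fun i' => π i' ((Pi.single i 1 : ∀ i, ZMod (p ^ r i)) i')) = Pi.single i 1 := by
          funext i'
          by_cases hi : i' = i
          · subst hi; simp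
          · simp [hi]
        simp only [h2] at this
        simpa using this
      · funext j
        have := H (0, Pi.single j 1)
        rw [Matrix.dotProduct_mulVec] at this
        have h0 : (fun i' : Fin t => π i' ((0 : ∀ i, ZMod (p ^ r i)) i')) = 0 := by
          funext i'; simp
        simp only [h0, zero_dotProduct, Matrix.dotProduct_mulVec] at this
        simpa using this.symm
    · rintro ⟨h1, h2⟩ h
      rw [h1, Matrix.dotProduct_mulVec, h2]
      simp
  simp only [hrad]
  have hrs : c.rank = s ↔ ∀ k, c.mulVec k = 0 → k = 0 := by
    have h1 := LinearMap.finrank_range_add_finrank_ker c.mulVecLin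
    rw [Module.finrank_fin_fun] at h1
    have h2 : c.rank = Module.finrank (ZMod p) (LinearMap.range c.mulVecLin) := rfl
    rw [h2]
    have h3 : (∀ k, c.mulVec k = 0 → k = 0) ↔ LinearMap.ker c.mulVecLin = ⊥ := by
      rw [LinearMap.ker_eq_bot']; rfl
    rw [h3, ← Submodule.finrank_eq_zero]
    omega
  have hrt : c.rank = t ↔ ∀ u, Matrix.vecMul u c = 0 → u = 0 := by
    have h1 := LinearMap.finrank_range_add_finrank_ker c.transpose.mulVecLin
    rw [Module.finrank_fin_fun] at h1
    have h2 : c.transpose.rank = Module.finrank (ZMod p) (LinearMap.range c.transpose.mulVecLin) :=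
      rfl
    rw [← Matrix.rank_transpose, h2]
    have h3 : (∀ u, Matrix.vecMul u c = 0 → u = 0) ↔ LinearMap.ker c.transpose.mulVecLin = ⊥ := by
      rw [LinearMap.ker_eq_bot']
      simp [Matrix.mulVec_transpose]
    rw [h3, ← Submodule.finrank_eq_zero]
    omega
  constructor
  · intro H
    have hs' := hrs.mpr (fun k hk => by
      have := H (0, k) ⟨hk, by
        have h0 : (fun i' : Fin t => π i' ((0 : ∀ i, ZMod (p ^ r i)) i')) = 0 := by
          funext i'; simp
        simp only [h0, Matrix.zero_vecMul]⟩
      exact congrArg Prod.snd this)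
    have ht' := hrt.mpr (fun u hu => by
      have h0 : (fun i' : Fin t => π i' ((u i').val : ZMod (p ^ r i'))) = u := by
        funext i'; simp
      have := H (fun i => ((u i).val : ZMod (p ^ r i)), 0) ⟨by simp, by
        simp only [h0, hu]⟩
      have h1 := congrArg Prod.fst this
      simp only at h1
      rw [← h0]
      funext i
      have h2 := congrFun h1 i
      simp only [h2]
      simp)
    refine ⟨by omega, fun i => ?_, ht'⟩
    by_contra hne
    have hri : 2 ≤ r i := by have := hr i; omega
    have h0 : (fun i' : Fin t => π i' ((Pi.single i (p : ZMod (p ^ r i)) :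
        ∀ i, ZMod (p ^ r i)) i')) = 0 := by
      funext i'
      by_cases hi : i' = i
      · subst hi; simp
      · simp [hi]
    have := H (Pi.single i (p : ZMod (p ^ r i)), 0) ⟨by simp, by
      simp only [h0, Matrix.zero_vecMul]⟩
    have h1 := congrFun (congrArg Prod.fst this) i
    simp only [Pi.single_eq_same, Prod.fst_zero, Pi.zero_apply] at h1
    rw [ZMod.natCast_eq_zero_iff] at h1
    have h2 : p ^ 2 ∣ p ^ 1 := by
      rw [pow_one]; exact (pow_dvd_pow p hri).trans h1
    have := (Nat.pow_dvd_pow_iff_le_right hp.one_lt).mp h2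
    omega
  · rintro ⟨hst, hr1, hrank⟩ ⟨m, k⟩ ⟨hk, hm⟩
    have hk0 : k = 0 := hrs.mp (by omega) k hk
    have hm0 := hrt.mp hrank _ hm
    have : m = 0 := by
      funext i
      have h1 : π i (m i) = 0 := congrFun hm0 i
      rw [← ZMod.natCast_zmod_val (m i), map_natCast, ZMod.natCast_eq_zero_iff] at h1
      rw [← ZMod.natCast_zmod_val (m i), Pi.zero_apply, ZMod.natCast_eq_zero_iff]
      have h2 : p ^ r i = p := by rw [hr1 i, pow_one]
      exact (dvd_of_eq h2).trans h1
    rw [hk0, this]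
    rfl

theorem alpha_central_type_iff (p t s : ℕ) (hp : p.Prime) (ht : 1 ≤ t) (hs : 1 ≤ s)
    (r : Fin t → ℕ) (hr : ∀ i, 1 ≤ r i)
    (c : Matrix (Fin t) (Fin s) (ZMod p)) (ξ : ℂˣ) (hξ : IsPrimitiveRoot ξ p) :
    (∀ (V₁ : Type) [AddCommGroup V₁] [Module ℂ V₁] [FiniteDimensional ℂ V₁] [Nontrivial V₁]
        (V₂ : Type) [AddCommGroup V₂] [Module ℂ V₂] [FiniteDimensional ℂ V₂] [Nontrivial V₂]
        (ρ₁ : ((∀ i : Fin t, ZMod (p ^ r i)) × (Fin s → ZMod p)) → (V₁ →ₗ[ℂ] V₁))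
        (ρ₂ : ((∀ i : Fin t, ZMod (p ^ r i)) × (Fin s → ZMod p)) → (V₂ →ₗ[ℂ] V₂)),
        ρ₁ 0 = LinearMap.id →
        (∀ g h, ρ₁ g ∘ₗ ρ₁ h = (bilinAlpha p r hr c ξ g h : ℂ) • ρ₁ (g + h)) →
        (∀ W : Submodule ℂ V₁, (∀ g, (ρ₁ g) '' (W : Set V₁) ⊆ (W : Set V₁)) → W = ⊥ ∨ W = ⊤) →
        ρ₂ 0 = LinearMap.id →
        (∀ g h, ρ₂ g ∘ₗ ρ₂ h = (bilinAlpha p r hr c ξ g h : ℂ) • ρ₂ (g + h)) →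
        (∀ W : Submodule ℂ V₂, (∀ g, (ρ₂ g) '' (W : Set V₂) ⊆ (W : Set V₂)) → W = ⊥ ∨ W = ⊤) →
        ∃ T : V₁ ≃ₗ[ℂ] V₂, ∀ g v, T (ρ₁ g v) = ρ₂ g (T v)) ↔
      (s = t ∧ (∀ i, r i = 1) ∧ c.rank = t) := by
  have := Fact.mk hp
  have : ∀ i, NeZero (p ^ r i) := fun i => ⟨pow_ne_zero _ hp.ne_zero⟩
  let π : ∀ i, ZMod (p ^ r i) →+* ZMod p := fun i =>
    ZMod.castHom (dvd_pow_self p (Nat.one_le_iff_ne_zero.mp (hr i))) (ZMod p)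
  let B : ((∀ i : Fin t, ZMod (p ^ r i)) × (Fin s → ZMod p)) →+
      ((∀ i : Fin t, ZMod (p ^ r i)) × (Fin s → ZMod p)) →+ ZMod p :=
    AddMonoidHom.mk' (fun g => AddMonoidHom.mk'
      (fun h => ∑ i, ∑ j, c i j * π i (h.1 i) * g.2 j)
      (fun a b => by simp [mul_add, add_mul, Finset.sum_add_distrib]))
      (fun a b => by
        ext1 h
        simp [mul_add, Finset.sum_add_distrib])
  have hξ' : ((ξ : ℂ)) ^ p = 1 := by
    rw [← Units.val_pow_eq_pow_val, hξ.pow_eq_one, Units.val_one]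
  let e : AddChar (ZMod p) ℂ := AddChar.zmodChar p hξ'
  have he : Function.Injective e := by
    intro a b hab
    simp only [e, AddChar.zmodChar_apply] at hab
    have h1 : IsPrimitiveRoot (ξ : ℂ) p := IsPrimitiveRoot.coe_units_iff.mpr hξ
    exact ZMod.val_injective p (h1.pow_inj (ZMod.val_lt a) (ZMod.val_lt b) hab)
  have hα : ∀ g h, (bilinAlpha p r hr c ξ g h : ℂ) = e (B g h) := by
    intro g h
    simp only [bilinAlpha, e, AddChar.zmodChar_apply, Units.val_pow_eq_pow_val]
    rfl
  rw [← radical_iff p t s hp r hr c π]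
  simp only [hα]
  constructor
  · intro H
    have := trivial_of_equiv B e (fun V₁ _ _ _ _ V₂ _ _ _ _ ρ₁ ρ₂ h₁ i₁ h₂ i₂ =>
      H V₁ V₂ ρ₁ ρ₂ h₁.1 h₁.2 i₁ h₂.1 h₂.2 i₂)
    exact this
  · intro hK V₁ _ _ _ _ V₂ _ _ _ _ ρ₁ ρ₂ a₁ b₁ i₁ a₂ b₂ i₂
    exact equiv_of_trivial B e he hK ρ₁ ρ₂ ⟨a₁, b₁⟩ i₁ ⟨a₂, b₂⟩ i₂
end

section
/- Let p be a prime and let B : Matrix (Fin t) (Fin s) (ZMod p) have rank n over the field ZMod p. For D : Fin s → ZMod p let B' D : Matrix (Fin (t + 1)) (Fin s) (ZMod p) be the matrix whose first t rows are those of B and whose last row is D. Then the number of D with (B' D).rank = n equals p ^ n, and the number of D with (B' D).rank = n + 1 equals p ^ n * (p ^ (s - n) - 1); moreover every D yields (B' D).rank = n or n + 1. -/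
theorem count_row_extensions_by_rank
    (p t s n : ℕ) (hp : p.Prime) (B : Matrix (Fin t) (Fin s) (ZMod p)) (hB : B.rank = n) :
    Nat.card {D : Fin s → ZMod p //
        (Matrix.of (Fin.snoc (fun i => B i) D) : Matrix (Fin (t + 1)) (Fin s) (ZMod p)).rank = n}
      = p ^ n ∧
    Nat.card {D : Fin s → ZMod p //
        (Matrix.of (Fin.snoc (fun i => B i) D) : Matrix (Fin (t + 1)) (Fin s) (ZMod p)).rank
          = n + 1}
      = p ^ n * (p ^ (s - n) - 1) ∧
    (∀ D : Fin s → ZMod p,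
      (Matrix.of (Fin.snoc (fun i => B i) D) : Matrix (Fin (t + 1)) (Fin s) (ZMod p)).rank = n ∨
      (Matrix.of (Fin.snoc (fun i => B i) D) : Matrix (Fin (t + 1)) (Fin s) (ZMod p)).rank
        = n + 1) := by
  haveI : Fact p.Prime := ⟨hp⟩
  set V : Submodule (ZMod p) (Fin s → ZMod p) := Submodule.span (ZMod p) (Set.range B.row) with hV
  have hVn : Module.finrank (ZMod p) V = n := by
    rw [← hB, Matrix.rank_eq_finrank_span_row]
  have hrank : ∀ D : Fin s → ZMod p,
      (Matrix.of (Fin.snoc (fun i => B i) D) : Matrix (Fin (t + 1)) (Fin s) (ZMod p)).rank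
        = Module.finrank (ZMod p) ↥(Submodule.span (ZMod p) {D} ⊔ V) := by
    intro D
    rw [Matrix.rank_eq_finrank_span_row]
    have h : Set.range (Matrix.of (Fin.snoc (fun i => B i) D) :
        Matrix (Fin (t + 1)) (Fin s) (ZMod p)).row = insert D (Set.range B.row) :=
      Fin.range_snoc (fun i => B i) D
    rw [h, Submodule.span_insert]
  have hin : ∀ D : Fin s → ZMod p, D ∈ V →
      (Matrix.of (Fin.snoc (fun i => B i) D) : Matrix (Fin (t + 1)) (Fin s) (ZMod p)).rank
        = n := by
    intro D hD
    rw [hrank, sup_eq_right.mpr ((Submodule.span_singleton_le_iff_mem D V).mpr hD), hVn]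
  have hout : ∀ D : Fin s → ZMod p, D ∉ V →
      (Matrix.of (Fin.snoc (fun i => B i) D) : Matrix (Fin (t + 1)) (Fin s) (ZMod p)).rank
        = n + 1 := by
    intro D hD
    have hD0 : D ≠ 0 := fun h => hD (h ▸ V.zero_mem)
    have h1 := Submodule.finrank_add_le_finrank_add_finrank (Submodule.span (ZMod p) {D}) V
    have h2 : V < Submodule.span (ZMod p) {D} ⊔ V := by
      refine lt_of_le_of_ne le_sup_right fun h => hD ?_
      rw [h]
      exact Submodule.mem_sup_left (Submodule.mem_span_singleton_self D)
    have h3 := Submodule.finrank_lt_finrank_of_lt h2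
    rw [finrank_span_singleton hD0] at h1
    rw [hrank]
    omega
  have hcV : Nat.card V = p ^ n := by
    rw [Module.natCard_eq_pow_finrank (K := ZMod p), hVn, Nat.card_zmod]
  have e1 : ∀ D : Fin s → ZMod p,
      (Matrix.of (Fin.snoc (fun i => B i) D) : Matrix (Fin (t + 1)) (Fin s) (ZMod p)).rank = n
        ↔ D ∈ V := by
    intro D
    refine ⟨fun h => ?_, hin D⟩
    by_contra hD
    have := hout D hD
    omega
  have e2 : ∀ D : Fin s → ZMod p,
      (Matrix.of (Fin.snoc (fun i => B i) D) : Matrix (Fin (t + 1)) (Fin s) (ZMod p)).rank = n + 1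
        ↔ ¬ D ∈ V := by
    intro D
    refine ⟨fun h hD => ?_, hout D⟩
    have := hin D hD
    omega
  have hns : n ≤ s := by
    have := Submodule.finrank_le V
    rw [hVn, Module.finrank_fin_fun] at this
    exact this
  refine ⟨?_, ?_, ?_⟩
  · rw [Nat.card_congr (Equiv.subtypeEquivRight e1)]
    exact hcV
  · rw [Nat.card_congr (Equiv.subtypeEquivRight e2)]
    classical
    have h := Nat.card_congr (Equiv.sumCompl (fun D : Fin s → ZMod p => D ∈ V))
    rw [Nat.card_sum, Nat.card_fun, Nat.card_zmod, Nat.card_fin] at h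
    have hcV' : Nat.card {D : Fin s → ZMod p // D ∈ V} = p ^ n := hcV
    rw [hcV'] at h
    rw [Nat.mul_sub, ← pow_add, Nat.add_sub_cancel' hns, mul_one, ← h, Nat.add_sub_cancel_left]
  · intro D
    by_cases hD : D ∈ V
    · exact Or.inl (hin D hD)
    · exact Or.inr (hout D hD)
end

section
/- Let p be a prime and m, n, r natural numbers with r ≤ m. The number of matrices A : Matrix (Fin m) (Fin n) (ZMod p) of rank r over the field ZMod p equals (∏_{j=1}^{r} (p ^ n - p ^ (j - 1))) * (Σ p ^ (Σ_{i=1}^{r} i * jᵢ)), where the outer sum ranges over all r-tuples (j₁, …, j_r) of natural numbers with j₁ + ⋯ + j_r ≤ m - r. -/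
/-- The sum over tuples. -/
def tupleSum (p r d : ℕ) : ℕ :=
  ∑ j ∈ Finset.filter (fun j : Fin r → ℕ => ∑ i, j i ≤ d)
      (Fintype.piFinset fun _ : Fin r => Finset.range (d + 1)),
    p ^ (∑ i : Fin r, (i.val + 1) * j i)

lemma mem_tuples (r d : ℕ) (j : Fin r → ℕ) :
    j ∈ Finset.filter (fun j : Fin r → ℕ => ∑ i, j i ≤ d)
      (Fintype.piFinset fun _ : Fin r => Finset.range (d + 1)) ↔ ∑ i, j i ≤ d := by
  simp only [Finset.mem_filter, Fintype.mem_piFinset, Finset.mem_range, and_iff_right_iff_imp]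
  intro h i
  have := Finset.single_le_sum (f := j) (fun _ _ => Nat.zero_le _) (Finset.mem_univ i)
  omega

lemma tupleSum_zero_left (p d : ℕ) : tupleSum p 0 d = 1 := by
  simp [tupleSum]

lemma tupleSum_zero_right (p r : ℕ) : tupleSum p r 0 = 1 := by
  unfold tupleSum
  rw [Finset.sum_eq_single (0 : Fin r → ℕ)]
  · simp
  · intro b hb hb0
    rw [mem_tuples] at hb
    exfalso; apply hb0
    funext i
    have := Finset.single_le_sum (f := b) (fun _ _ => Nat.zero_le _) (Finset.mem_univ i)
    simp only [Pi.zero_apply]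
    omega
  · intro h
    exact absurd ((mem_tuples r 0 0).2 (by simp)) h

lemma tupleSum_succ (p r d : ℕ) :
    tupleSum p (r + 1) (d + 1) = p ^ (r + 1) * tupleSum p (r + 1) d + tupleSum p r (d + 1) := by
  conv_lhs => unfold tupleSum
  rw [← Finset.sum_filter_not_add_sum_filter _ (fun j : Fin (r + 1) → ℕ => j (Fin.last r) = 0)]
  congr 1
  · unfold tupleSum
    rw [Finset.mul_sum]
    refine Finset.sum_nbij' (fun j => Fin.snoc (Fin.init j) (j (Fin.last r) - 1))
      (fun j => Fin.snoc (Fin.init j) (j (Fin.last r) + 1)) ?_ ?_ ?_ ?_ ?_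
    · intro j hj
      rw [Finset.mem_filter, mem_tuples, Fin.sum_univ_castSucc] at hj
      rw [mem_tuples, Fin.sum_univ_castSucc]
      simp only [Fin.snoc_castSucc, Fin.snoc_last, Fin.init]
      omega
    · intro j hj
      rw [mem_tuples, Fin.sum_univ_castSucc] at hj
      rw [Finset.mem_filter, mem_tuples, Fin.sum_univ_castSucc]
      simp only [Fin.snoc_castSucc, Fin.snoc_last, Fin.init]
      omega
    · intro j hj
      rw [Finset.mem_filter] at hj
      have h : j (Fin.last r) - 1 + 1 = j (Fin.last r) := by omega
      simp [h]
    · intro j hj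
      simp
    · intro j hj
      rw [Finset.mem_filter] at hj
      obtain ⟨k, hk⟩ := Nat.exists_eq_succ_of_ne_zero hj.2
      rw [← pow_add, Fin.sum_univ_castSucc, Fin.sum_univ_castSucc]
      simp only [Fin.snoc_castSucc, Fin.snoc_last, Fin.init, hk]
      congr 1
      simp
      ring
  · unfold tupleSum
    refine Finset.sum_nbij' (fun j => Fin.init j) (fun j => Fin.snoc j 0) ?_ ?_ ?_ ?_ ?_
    · intro j hj
      rw [Finset.mem_filter, mem_tuples, Fin.sum_univ_castSucc] at hj
      rw [mem_tuples]
      simp only [Fin.init]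
      omega
    · intro j hj
      rw [mem_tuples] at hj
      rw [Finset.mem_filter, mem_tuples, Fin.sum_univ_castSucc]
      simpa using hj
    · intro j hj
      rw [Finset.mem_filter] at hj
      rw [← hj.2, Fin.snoc_init_self]
    · intro j hj
      simp
    · intro j hj
      rw [Finset.mem_filter] at hj
      rw [Fin.sum_univ_castSucc, hj.2]
      simp [Fin.init]

section
variable {K V : Type*} [Field K] [AddCommGroup V] [Module K V] [Fintype K] [Fintype V]

/-- The rank of a tuple of vectors. -/
noncomputable def tupleRank (K : Type*) {V : Type*} [Field K] [AddCommGroup V] [Module K V] {m : ℕ}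
    (v : Fin m → V) : ℕ :=
  Module.finrank K (Submodule.span K (Set.range v))

open Classical in
lemma card_extend {m : ℕ} (v : Fin m → V) (r : ℕ) :
    (Finset.univ.filter fun x : V => tupleRank K (Fin.cons x v : Fin (m + 1) → V) = r).card
      = (if tupleRank K v = r then Fintype.card K ^ r else 0)
        + (if tupleRank K v + 1 = r then Fintype.card V - Fintype.card K ^ (r - 1) else 0) := by
  set W := Submodule.span K (Set.range v) with hW
  have hin : ∀ x ∈ W, tupleRank K (Fin.cons x v : Fin (m + 1) → V) = tupleRank K v := by
    intro x hx
    unfold tupleRank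
    rw [Fin.range_cons, Submodule.span_insert_eq_span hx]
  have hout : ∀ x ∉ W, tupleRank K (Fin.cons x v : Fin (m + 1) → V) = tupleRank K v + 1 := by
    intro x hx
    unfold tupleRank
    rw [Fin.range_cons, Submodule.span_insert, sup_comm]
    exact Submodule.finrank_sup_span_singleton hx
  have hcard : (Finset.univ.filter fun x : V => x ∈ W).card = Fintype.card K ^ tupleRank K v := by
    rw [← Fintype.card_subtype]
    exact Module.card_eq_pow_finrank (K := K) (V := W)
  have hcard' : (Finset.univ.filter fun x : V => x ∉ W).card
      = Fintype.card V - Fintype.card K ^ tupleRank K v := by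
    rw [← hcard, ← Finset.card_univ,
      ← Finset.card_filter_add_card_filter_not (s := Finset.univ) (fun x : V => x ∈ W)]
    omega
  by_cases h1 : tupleRank K v = r
  · have h2 : tupleRank K v + 1 ≠ r := by omega
    rw [if_pos h1, if_neg h2, add_zero, ← h1, ← hcard]
    congr 1
    ext x
    simp only [Finset.mem_filter, Finset.mem_univ, true_and]
    by_cases hx : x ∈ W
    · simp [hx, hin x hx]
    · simp [hx, hout x hx]
  · rw [if_neg h1, zero_add]
    by_cases h2 : tupleRank K v + 1 = r
    · rw [if_pos h2, ← h2, Nat.add_sub_cancel, ← hcard']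
      congr 1
      ext x
      simp only [Finset.mem_filter, Finset.mem_univ, true_and]
      by_cases hx : x ∈ W
      · simp [hx, hin x hx]
      · simp [hx, hout x hx]
    · rw [if_neg h2, Finset.card_eq_zero, Finset.filter_eq_empty_iff]
      intro x _
      by_cases hx : x ∈ W
      · rwa [hin x hx]
      · rwa [hout x hx]

open Classical in
/-- The number of tuples of given rank. -/
noncomputable def tupleCount (K V : Type*) [Field K] [AddCommGroup V] [Module K V] [Fintype V]
    (m r : ℕ) : ℕ :=
  (Finset.univ.filter fun v : Fin m → V => tupleRank K v = r).card

lemma tupleCount_succ (m r : ℕ) :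
    tupleCount K V (m + 1) r = Fintype.card K ^ r * tupleCount K V m r
      + (if r = 0 then 0 else
        (Fintype.card V - Fintype.card K ^ (r - 1)) * tupleCount K V m (r - 1)) := by
  classical
  have h1 : tupleCount K V (m + 1) r = ∑ v : Fin m → V,
      (Finset.univ.filter fun x : V => tupleRank K (Fin.cons x v : Fin (m + 1) → V) = r).card := by
    unfold tupleCount
    simp only [Finset.card_filter]
    rw [← (Fin.consEquiv fun _ : Fin (m + 1) => V).sum_comp, Fintype.sum_prod_type, Finset.sum_comm]
    rfl
  rw [h1]
  simp only [card_extend]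
  rw [Finset.sum_add_distrib]
  congr 1
  · unfold tupleCount
    rw [← Finset.sum_filter, Finset.sum_const, smul_eq_mul, mul_comm]
  · rcases r with _ | r
    · simp
    · simp only [Nat.add_right_cancel_iff, Nat.add_sub_cancel, Nat.succ_ne_zero, if_false]
      unfold tupleCount
      rw [← Finset.sum_filter, Finset.sum_const, smul_eq_mul, mul_comm]

lemma tupleCount_of_lt (m r : ℕ) (h : m < r) : tupleCount K V m r = 0 := by
  classical
  unfold tupleCount
  rw [Finset.card_eq_zero, Finset.filter_eq_empty_iff]
  intro v _ hv
  have := finrank_range_le_card (R := K) v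
  rw [Fintype.card_fin] at this
  unfold tupleRank at hv
  rw [Set.finrank] at this
  omega

lemma tupleCount_eq (m : ℕ) : ∀ r ≤ m, tupleCount K V m r =
    (∏ j ∈ Finset.range r, (Fintype.card V - Fintype.card K ^ j))
      * tupleSum (Fintype.card K) r (m - r) := by
  induction m with
  | zero =>
    intro r hr
    obtain rfl : r = 0 := by omega
    rw [tupleSum_zero_left]
    simp [tupleCount, tupleRank, Set.range_eq_empty]
  | succ m ih =>
    intro r hr
    rw [tupleCount_succ]
    rcases r with _ | r
    · rw [ih 0 (Nat.zero_le _), tupleSum_zero_left, tupleSum_zero_left]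
      simp
    · rw [if_neg (Nat.succ_ne_zero r), Nat.add_sub_cancel, ih r (by omega), Finset.prod_range_succ]
      rcases Nat.lt_or_ge m (r + 1) with h | h
      · obtain rfl : m = r := by omega
        rw [tupleCount_of_lt m (m + 1) (by omega)]
        simp only [Nat.sub_self, tupleSum_zero_right]
        ring
      · obtain ⟨d, rfl⟩ := Nat.exists_eq_add_of_le h
        rw [ih (r + 1) (by omega), Finset.prod_range_succ]
        have e1 : r + 1 + d - (r + 1) = d := by omega
        have e2 : r + 1 + d - r = d + 1 := by omega
        have e3 : r + 1 + d + 1 - (r + 1) = d + 1 := by omega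
        rw [e1, e2, e3, tupleSum_succ]
        ring
end

theorem count_matrices_of_rank
    (p m n r : ℕ) (hp : p.Prime) (hr : r ≤ m) :
    Nat.card {A : Matrix (Fin m) (Fin n) (ZMod p) // A.rank = r} =
      (∏ j ∈ Finset.range r, (p ^ n - p ^ j)) *
        ∑ j ∈ Finset.filter (fun j : Fin r → ℕ => ∑ i, j i ≤ m - r)
            (Fintype.piFinset fun _ : Fin r => Finset.range (m - r + 1)),
          p ^ (∑ i : Fin r, (i.val + 1) * j i) := by
  classical
  haveI : Fact p.Prime := ⟨hp⟩
  have key := tupleCount_eq (K := ZMod p) (V := Fin n → ZMod p) m r hr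
  rw [ZMod.card, Fintype.card_fun, ZMod.card, Fintype.card_fin] at key
  refine Eq.trans ?_ key
  unfold tupleCount
  rw [← Fintype.card_subtype, ← Nat.card_eq_fintype_card]
  refine Nat.card_congr (Equiv.subtypeEquiv (Equiv.refl _) ?_)
  intro A
  rw [Matrix.rank_eq_finrank_span_row]
  rfl
end
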